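/- arXiv:2108.00736 — 3 statements merged into one kernel-verified Lean document; each statement's English description precedes it below -/
import Mathlib

section
/- For every ℓ with 2ℓ ∈ ℕ and every pair of admissible indices m, s ∈ {−ℓ, −ℓ+1, …, ℓ}, the extended Wigner function D̂^ℓ_{m,s} : ℂ² → ℂ is a polynomial in α, conj(α), β, conj(β) of total degree 2ℓ which is real-homogeneous of degree 2ℓ (D̂^ℓ_{m,s}(tα, tβ) = t^{2ℓ} D̂^ℓ_{m,s}(α, β) for all real t ≥ 0) and harmonic on ℝ⁴ ≅ ℂ²: writing α = x₀ + i y₀ and β = x₁ + i y₁, one has (∂²/∂x₀² + ∂²/∂y₀² + ∂²/∂x₁² + ∂²/∂y₁²) D̂^ℓ_{m,s} = 0 identically on ℂ². -/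
/-!
With `z₁ = 1` the generating identity says that, up to a nonzero constant, `D̂^ℓ_{m,s}` is a
coefficient in `z` of `U ^ k * V ^ l`, where `U = conj α z + conj β`, `V = -β z + α` and
`k + l = 2ℓ`. Treating `α, conj α, β, conj β` as independent variables, `U` and `V` are linear
forms, so that this coefficient is homogeneous of degree `k + l`; it does not vanish, since at
`(1, 1, -1, 1)` it is a coefficient of `(z + 1) ^ (k + l)`. In Wirtinger coordinates a quarter of
the Laplacian is `∂_α ∂_{conj α} + ∂_β ∂_{conj β}`, and the two terms send `U ^ k * V ^ l` to
`k l z U ^ (k - 1) V ^ (l - 1)` and its negative.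
-/

open scoped ComplexConjugate
open Complex

noncomputable section

/-- The second directional derivative (in the real sense) of `f : ℂ × ℂ → ℂ` in the
direction `v`, evaluated at `p`.  Summing `dd f v p` over the four directions
`(1,0), (I,0), (0,1), (0,I)` (i.e. `∂²/∂x₀² + ∂²/∂y₀² + ∂²/∂x₁² + ∂²/∂y₁²` with
`α = x₀ + i y₀`, `β = x₁ + i y₁`) gives the Laplacian of `ℝ⁴ ≅ ℂ²`. -/
def dd (f : ℂ × ℂ → ℂ) (v p : ℂ × ℂ) : ℂ :=
  fderiv ℝ (fun q => fderiv ℝ f q v) p v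

section PolynomialIdentity

open Polynomial

theorem coeff_eq_of_forall_sum_eq_eval {A : Type*} [CommRing A] [IsDomain A] [Infinite A]
    {n : ℕ} {a : Fin n → A} {Q : A[X]} (h : ∀ z, ∑ i, a i * z ^ (i : ℕ) = Q.eval z) (j : Fin n) :
    a j = Q.coeff j := by
  have hQ : ∑ i, C (a i) * X ^ (i : ℕ) = Q :=
    Polynomial.funext fun z ↦ by simp [eval_finsetSum, h]
  simp [← hQ, coeff_X_pow, Fin.val_inj]

end PolynomialIdentity

section CoeffwiseDerivation

open Polynomial

variable {R A : Type*} [CommRing R] [CommRing A] [Algebra R A] (d : Derivation R A A)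

/-- The extension of a derivation of `A` to `A[X]` that acts on each coefficient; it is
`Derivation.mapCoeffs` with its target identified with `A[X]`. -/
def coeffwiseDerivation : Derivation R A[X] A[X] :=
  PolynomialModule.equivPolynomialSelf.compDer d.mapCoeffs

theorem coeff_coeffwiseDerivation (p : A[X]) (i : ℕ) :
    (coeffwiseDerivation d p).coeff i = d (p.coeff i) :=
  rfl

theorem coeffwiseDerivation_X : coeffwiseDerivation d X = 0 := by
  ext i
  rw [coeff_coeffwiseDerivation, coeff_X, coeff_zero]
  split_ifs <;> simp

theorem coeffwiseDerivation_C (a : A) : coeffwiseDerivation d (C a) = C (d a) := by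
  ext i
  simp only [coeff_coeffwiseDerivation, coeff_C]
  split_ifs <;> simp

end CoeffwiseDerivation

section HomogeneousCoefficients

open Polynomial

variable {R σ : Type*} [CommSemiring R]

theorem isHomogeneous_coeff_mul {p q : (MvPolynomial σ R)[X]} {d e : ℕ}
    (hp : ∀ i, (p.coeff i).IsHomogeneous d) (hq : ∀ i, (q.coeff i).IsHomogeneous e) (i : ℕ) :
    ((p * q).coeff i).IsHomogeneous (d + e) := by
  rw [coeff_mul]
  exact MvPolynomial.IsHomogeneous.sum _ _ _ fun x _ ↦ (hp x.1).mul (hq x.2)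

theorem isHomogeneous_coeff_pow {p : (MvPolynomial σ R)[X]} {d : ℕ}
    (hp : ∀ i, (p.coeff i).IsHomogeneous d) (m i : ℕ) :
    ((p ^ m).coeff i).IsHomogeneous (m * d) := by
  induction m generalizing i with
  | zero =>
    rw [pow_zero, zero_mul, coeff_one]
    split_ifs
    · exact MvPolynomial.isHomogeneous_one _ _
    · exact MvPolynomial.isHomogeneous_zero _ _ _
  | succ m ih =>
    rw [pow_succ, Nat.succ_mul]
    exact isHomogeneous_coeff_mul ih hp i

theorem isHomogeneous_coeff_C_mul_X_add_C {a b : MvPolynomial σ R} {d : ℕ}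
    (ha : a.IsHomogeneous d) (hb : b.IsHomogeneous d) (i : ℕ) :
    ((C a * X + C b).coeff i).IsHomogeneous d := by
  rcases i with _ | _ | i
  · simpa using hb
  · simpa [coeff_C] using ha
  · simpa [coeff_C, coeff_X] using MvPolynomial.isHomogeneous_zero _ _ _

theorem eval_smul_of_isHomogeneous {P : MvPolynomial σ R} {n : ℕ} (hP : P.IsHomogeneous n)
    (t : R) (x : σ → R) : MvPolynomial.eval (t • x) P = t ^ n * MvPolynomial.eval x P := by
  rw [MvPolynomial.eval_eq, MvPolynomial.eval_eq, Finset.mul_sum]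
  refine Finset.sum_congr rfl fun d hd ↦ ?_
  simp only [Pi.smul_apply, smul_eq_mul, mul_pow, Finset.prod_mul_distrib,
    Finset.prod_pow_eq_pow_sum, ← hP.degree_eq_sum_deg_support hd]
  ring

end HomogeneousCoefficients

section Wirtinger

open MvPolynomial

theorem pderiv_pderiv_comm {R σ : Type*} [CommSemiring R] (i j : σ) (P : MvPolynomial σ R) :
    pderiv i (pderiv j P) = pderiv j (pderiv i P) := by
  classical
  induction P using MvPolynomial.induction_on with
  | C a => simp
  | add P Q hP hQ => simp only [map_add, hP, hQ]
  | mul_X P m hP =>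
    simp only [pderiv_mul, pderiv_X, Pi.single_apply, map_add, hP, apply_ite, map_zero,
      pderiv_one]
    split_ifs <;> ring

theorem hasFDerivAt_mvPolynomial_eval {𝕜 A σ : Type*} [NontriviallyNormedField 𝕜] [NormedCommRing A]
    [NormedAlgebra 𝕜 A] [Fintype σ] (P : MvPolynomial σ A) (x : σ → A) :
    HasFDerivAt (fun y ↦ eval y P)
      (∑ i, eval x (pderiv i P) • (ContinuousLinearMap.proj i : (σ → A) →L[𝕜] A)) x := by
  classical
  induction P using MvPolynomial.induction_on with
  | C a =>
    simp only [eval_C]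
    refine (hasFDerivAt_const a x).congr_fderiv ?_
    ext v
    simp
  | add P Q hP hQ =>
    simp only [map_add]
    refine (hP.fun_add hQ).congr_fderiv ?_
    ext v
    simp [add_mul, Finset.sum_add_distrib]
  | mul_X P i hP =>
    simp only [map_mul, eval_X]
    refine (hP.mul (hasFDerivAt_apply i x)).congr_fderiv ?_
    ext v
    simp [Pi.single_apply, apply_ite, add_mul, Finset.sum_add_distrib, Finset.mul_sum, mul_assoc]

theorem fderiv_mvPolynomial_eval_clm {𝕜 E A σ : Type*} [NontriviallyNormedField 𝕜]
    [NormedAddCommGroup E] [NormedSpace 𝕜 E] [NormedCommRing A] [NormedAlgebra 𝕜 A] [Fintype σ]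
    (L : E →L[𝕜] σ → A) (P : MvPolynomial σ A) (q v : E) :
    fderiv 𝕜 (fun q ↦ eval (L q) P) q v = eval (L q) (∑ i, C (L v i) * pderiv i P) := by
  have h := (hasFDerivAt_mvPolynomial_eval (𝕜 := 𝕜) P (L q)).comp q L.hasFDerivAt
  rw [show (fun q ↦ eval (L q) P) = (fun y ↦ eval y P) ∘ L from rfl, h.fderiv]
  simp [mul_comm]

theorem dd_mvPolynomial_eval_clm {σ : Type*} [Fintype σ] (L : ℂ × ℂ →L[ℝ] σ → ℂ)
    (P : MvPolynomial σ ℂ) (v p : ℂ × ℂ) :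
    dd (fun q ↦ eval (L q) P) v p =
      eval (L p) (∑ i, ∑ j, C (L v i * L v j) * pderiv i (pderiv j P)) := by
  simp only [dd, fderiv_mvPolynomial_eval_clm]
  simp only [map_sum, pderiv_C_mul, Finset.mul_sum, C_mul, mul_assoc]

/-- The real-linear map `(α, β) ↦ (α, conj α, β, conj β)`. -/
def wirtingerCoords : ℂ × ℂ →L[ℝ] Fin 4 → ℂ :=
  let conjL : ℂ →L[ℝ] ℂ := conjCLE
  let α := ContinuousLinearMap.fst ℝ ℂ ℂ
  let β := ContinuousLinearMap.snd ℝ ℂ ℂ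
  ContinuousLinearMap.pi ![α, conjL ∘L α, β, conjL ∘L β]

theorem wirtingerCoords_apply (q : ℂ × ℂ) :
    wirtingerCoords q = ![q.1, conj q.1, q.2, conj q.2] := by
  ext i
  fin_cases i <;> rfl

/-- The operator `∂_α ∂_{conj α} + ∂_β ∂_{conj β}` on polynomials in `α, conj α, β, conj β`
(the variables `0, 1, 2, 3`), which is a quarter of the Laplacian of `ℂ² ≅ ℝ⁴`. -/
def wirtingerLaplacian (R : Type*) [CommSemiring R] :
    MvPolynomial (Fin 4) R →ₗ[R] MvPolynomial (Fin 4) R :=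
  (pderiv 0).toLinearMap ∘ₗ (pderiv 1).toLinearMap +
    (pderiv 2).toLinearMap ∘ₗ (pderiv 3).toLinearMap

theorem wirtingerLaplacian_apply {R : Type*} [CommSemiring R] (P : MvPolynomial (Fin 4) R) :
    wirtingerLaplacian R P = pderiv 0 (pderiv 1 P) + pderiv 2 (pderiv 3 P) :=
  rfl

theorem laplacian_eval_wirtingerCoords (P : MvPolynomial (Fin 4) ℂ) (p : ℂ × ℂ) :
    let f : ℂ × ℂ → ℂ := fun q ↦ eval (wirtingerCoords q) P
    dd f (1, 0) p + dd f (I, 0) p + dd f (0, 1) p + dd f (0, I) p =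
      4 * eval (wirtingerCoords p) (wirtingerLaplacian ℂ P) := by
  simp only [dd_mvPolynomial_eval_clm, wirtingerLaplacian_apply, map_add, map_mul, eval_C,
    Fin.sum_univ_four]
  simp only [wirtingerCoords_apply, Matrix.cons_val, map_one, map_zero, conj_I, mul_neg, neg_mul,
    I_mul_I, pderiv_pderiv_comm (1 : Fin 4) 0, pderiv_pderiv_comm (3 : Fin 4) 2]
  ring

end Wirtinger

section Wigner

open Polynomial

/-- The polynomial `(conj α z + conj β) ^ k * (-β z + α) ^ l` in `z` generating the extended Wigner
functions, with `α, conj α, β, conj β` replaced by independent elements `x 0, x 1, x 2, x 3`. -/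
def wignerGenerating {A : Type*} [CommRing A] (k l : ℕ) (x : Fin 4 → A) : A[X] :=
  (C (x 1) * X + C (x 3)) ^ k * (C (-x 2) * X + C (x 0)) ^ l

/-- The coefficient of `z ^ j` in `(conj α z + conj β) ^ k * (-β z + α) ^ l`, as a polynomial in
`α, conj α, β, conj β` (the variables `0, 1, 2, 3`). Up to normalization this is `D̂^ℓ_{m,s}` with
`k = ℓ + s`, `l = ℓ - s` and `j = ℓ + m`. -/
def wignerPolynomial (R : Type*) [CommRing R] (k l j : ℕ) : MvPolynomial (Fin 4) R :=
  (wignerGenerating k l MvPolynomial.X).coeff j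

theorem eval_wignerPolynomial {R : Type*} [CommRing R] (k l j : ℕ) (x : Fin 4 → R) :
    MvPolynomial.eval x (wignerPolynomial R k l j) = (wignerGenerating k l x).coeff j := by
  rw [wignerPolynomial, ← coeff_map]
  simp [wignerGenerating]

theorem isHomogeneous_wignerPolynomial (R : Type*) [CommRing R] (k l j : ℕ) :
    (wignerPolynomial R k l j).IsHomogeneous (k + l) := by
  have hX (i : Fin 4) := MvPolynomial.isHomogeneous_X R i
  simpa only [mul_one, wignerPolynomial, wignerGenerating, C_neg] using isHomogeneous_coeff_mul
    (isHomogeneous_coeff_pow (isHomogeneous_coeff_C_mul_X_add_C (hX 1) (hX 3)) k)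
    (isHomogeneous_coeff_pow (isHomogeneous_coeff_C_mul_X_add_C (hX 2).neg (hX 0)) l) j

theorem wignerPolynomial_ne_zero (R : Type*) [CommRing R] [CharZero R] {k l j : ℕ}
    (hj : j ≤ k + l) : wignerPolynomial R k l j ≠ 0 := by
  intro h
  have hchoose : MvPolynomial.eval ![1, 1, -1, 1] (wignerPolynomial R k l j) =
      ((k + l).choose j : R) := by
    rw [eval_wignerPolynomial, ← coeff_X_add_one_pow, pow_add]
    simp [wignerGenerating]
  rw [h, map_zero] at hchoose
  exact (Nat.choose_pos hj).ne (by exact_mod_cast hchoose)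

theorem wirtingerLaplacian_wignerPolynomial (R : Type*) [CommRing R] (k l j : ℕ) :
    wirtingerLaplacian R (wignerPolynomial R k l j) = 0 := by
  let D (i : Fin 4) := coeffwiseDerivation (MvPolynomial.pderiv (R := R) i)
  let U : (MvPolynomial (Fin 4) R)[X] := C (.X 1) * X + C (.X 3)
  let V : (MvPolynomial (Fin 4) R)[X] := C (-.X 2) * X + C (.X 0)
  have hU : D 0 U = 0 ∧ D 1 U = X ∧ D 2 U = 0 ∧ D 3 U = 1 := by
    simp [D, U, coeffwiseDerivation_X, coeffwiseDerivation_C]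
  have hV : D 0 V = 1 ∧ D 1 V = 0 ∧ D 2 V = -X ∧ D 3 V = 0 := by
    simp [D, V, coeffwiseDerivation_X, coeffwiseDerivation_C]
  have hX (i : Fin 4) : D i X = 0 := coeffwiseDerivation_X _
  have hD : D 0 (D 1 (U ^ k * V ^ l)) + D 2 (D 3 (U ^ k * V ^ l)) = 0 := by
    simp only [Derivation.leibniz, Derivation.leibniz_pow, Derivation.map_natCast, hU, hV, hX,
      smul_eq_mul, nsmul_eq_mul, mul_zero, mul_one, zero_add, add_zero, smul_zero]
    ring
  calc wirtingerLaplacian R (wignerPolynomial R k l j)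
      = (D 0 (D 1 (U ^ k * V ^ l)) + D 2 (D 3 (U ^ k * V ^ l))).coeff j := rfl
    _ = 0 := by rw [hD, coeff_zero]

theorem eq_eval_wignerPolynomial {K : Type*} [Field K] [Infinite K] {n k l : ℕ} {f c : Fin n → K}
    {κ : K} {x : Fin 4 → K}
    (hf : ∀ z, ∑ i, c i * z ^ (i : ℕ) * f i = κ * (wignerGenerating k l x).eval z)
    {j : Fin n} (hj : c j ≠ 0) :
    f j = MvPolynomial.eval x ((κ / c j) • wignerPolynomial K k l j) := by
  have h : c j * f j = (C κ * wignerGenerating k l x).coeff j :=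
    coeff_eq_of_forall_sum_eq_eval (a := fun i ↦ c i * f i)
      (fun z ↦ by simpa only [eval_mul, eval_C, mul_right_comm] using hf z) j
  rw [MvPolynomial.smul_eval, eval_wignerPolynomial]
  rw [coeff_C_mul] at h
  rw [div_mul_eq_mul_div, eq_div_iff hj, mul_comm, h]

end Wigner

theorem ofReal_sqrt_choose_ne_zero {n i : ℕ} (hi : i ≤ n) :
    (Real.sqrt (n.choose i) : ℂ) ≠ 0 := by
  have h : (0 : ℝ) < n.choose i := Nat.cast_pos.mpr (Nat.choose_pos hi)
  exact ofReal_ne_zero.mpr (Real.sqrt_pos.mpr h).ne'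

theorem extended_wigner_polynomial_homogeneous_harmonic_general
    (n : ℕ) (k : Fin (n + 1)) (F : Fin (n + 1) → ℂ → ℂ → ℂ)
    (hF : ∀ a b z₀ z₁ : ℂ,
      ∑ j : Fin (n + 1),
          (Real.sqrt (n.choose (j : ℕ)) : ℂ) * z₀ ^ (j : ℕ) * z₁ ^ (n - (j : ℕ)) * F j a b
        = (Real.sqrt (n.choose (k : ℕ)) : ℂ) * (conj a * z₀ + conj b * z₁) ^ (k : ℕ)
            * (-b * z₀ + a * z₁) ^ (n - (k : ℕ)))
    (j : Fin (n + 1)) :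
    (∃ P : MvPolynomial (Fin 4) ℂ, P.totalDegree = n ∧
        ∀ a b : ℂ, F j a b = MvPolynomial.eval (![a, conj a, b, conj b]) P) ∧
    (∀ (t : ℝ) (a b : ℂ), F j ((t : ℂ) * a) ((t : ℂ) * b) = (t : ℂ) ^ n * F j a b) ∧
    (∀ p : ℂ × ℂ,
        dd (fun q => F j q.1 q.2) (1, 0) p + dd (fun q => F j q.1 q.2) (I, 0) p
          + dd (fun q => F j q.1 q.2) (0, 1) p + dd (fun q => F j q.1 q.2) (0, I) p
          = 0) := by
  let c (i : Fin (n + 1)) : ℂ := Real.sqrt (n.choose (i : ℕ))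
  have hc (i) : c i ≠ 0 := ofReal_sqrt_choose_ne_zero i.is_le
  have hkn : (k : ℕ) + (n - k) = n := Nat.add_sub_of_le k.is_le
  let W := wignerPolynomial ℂ k (n - k) j
  let P := (c k / c j) • W
  have hFP (a b : ℂ) : F j a b = MvPolynomial.eval ![a, conj a, b, conj b] P :=
    eq_eval_wignerPolynomial (f := fun i ↦ F i a b) (fun z ↦ by
      simpa [wignerGenerating, mul_assoc] using hF a b z 1) (hc j)
  have hP : P.IsHomogeneous n := by
    simpa only [P, W, MvPolynomial.smul_eq_C_mul, hkn] using
      (isHomogeneous_wignerPolynomial ℂ k (n - k) j).C_mul (c k / c j)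
  have hP_ne : P ≠ 0 := smul_ne_zero (div_ne_zero (hc k) (hc j))
    (wignerPolynomial_ne_zero ℂ (hkn.symm ▸ j.is_le))
  refine ⟨⟨P, hP.totalDegree hP_ne, hFP⟩, fun t a b ↦ ?_, fun p ↦ ?_⟩
  · rw [hFP, hFP, ← eval_smul_of_isHomogeneous hP]
    simp
  · simp only [hFP, ← wirtingerCoords_apply]
    rw [laplacian_eval_wirtingerCoords, map_smul, wirtingerLaplacian_wignerPolynomial]
    simp

/-- each extended Wigner function `D̂^ℓ_{m,s} : ℂ² → ℂ` is a polynomial in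
`α, conj α, β, conj β` of total degree `2ℓ`, positively real-homogeneous of degree `2ℓ`,
and harmonic on `ℝ⁴ ≅ ℂ²`. -/
theorem extended_wigner_polynomial_homogeneous_harmonic
    (n : ℕ) (k : Fin (n + 1)) (F : Fin (n + 1) → ℂ → ℂ → ℂ)
    (hF : ∀ a b z₀ z₁ : ℂ,
      ∑ j : Fin (n + 1),
          (Real.sqrt (n.choose (j : ℕ)) : ℂ) * z₀ ^ (j : ℕ) * z₁ ^ (n - (j : ℕ)) * F j a b
        = (Real.sqrt (n.choose (k : ℕ)) : ℂ) * (conj a * z₀ + conj b * z₁) ^ (k : ℕ)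
            * (-b * z₀ + a * z₁) ^ (n - (k : ℕ)))
    (j : Fin (n + 1)) :
    (∃ P : MvPolynomial (Fin 4) ℂ, P.totalDegree = n ∧
        ∀ a b : ℂ, F j a b = MvPolynomial.eval (![a, conj a, b, conj b]) P) ∧
    (∀ t : ℝ, 0 ≤ t → ∀ a b : ℂ,
        F j ((t : ℂ) * a) ((t : ℂ) * b) = (t : ℂ) ^ n * F j a b) ∧
    (∀ p : ℂ × ℂ,
        dd (fun q => F j q.1 q.2) (1, 0) p + dd (fun q => F j q.1 q.2) (Complex.I, 0) p
          + dd (fun q => F j q.1 q.2) (0, 1) p + dd (fun q => F j q.1 q.2) (0, Complex.I) p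
          = 0) := by
  obtain ⟨hpoly, hhom, hharm⟩ :=
    extended_wigner_polynomial_homogeneous_harmonic_general n k F hF j
  exact ⟨hpoly, fun t _ ↦ hhom t, hharm⟩
end
end

section
/- Let z₀, z₁ ∈ ℂ be fixed and let f : ℂ² → ℂ be an entire holomorphic function. Then the function φ : ℂ² → ℂ defined by φ(α, β) := f(conj(α) z₀ − β z₁, conj(β) z₀ + α z₁) is harmonic on ℝ⁴ ≅ ℂ²: writing α = x₀ + i y₀ and β = x₁ + i y₁, one has (∂²/∂x₀² + ∂²/∂y₀² + ∂²/∂x₁² + ∂²/∂y₁²) φ = 0 identically. -/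
open scoped ComplexConjugate
open Complex

noncomputable section

/-!
For a real-linear `L` and a holomorphic `f`, the second derivative of `f ∘ L` along `v` is
`B (L v) (L v)`, where `B` is the complex Hessian of `f`. As `B` is symmetric and complex bilinear,
the second derivatives along `v` and `w` add up to `B (L v - I • L w) (L v + I • L w)`. For the
twist, the pairs `(1, 0), (I, 0)` and `(0, 1), (0, I)` contribute `4 z₀ z₁ B e₂ e₁` and
`-4 z₀ z₁ B e₁ e₂`, which cancel by symmetry.

That `f` is twice differentiable is a fact of several complex variables: by the Schwarz lemma the
difference quotients of `f` in a fixed direction converge uniformly on small balls, so Weierstrass'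
theorem makes each directional derivative of `f` holomorphic again.
-/

open Filter Metric Set
open scoped Topology ContDiff

section Holomorphic

variable {E F : Type*} [NormedAddCommGroup E] [NormedSpace ℂ E] [NormedAddCommGroup F]
  [NormedSpace ℂ F] {f : E → F} {U : Set E}

theorem norm_fderiv_le_of_forall_mem_ball_norm_le {c : E} {R C : ℝ} (hR : 0 < R)
    (hf : DifferentiableOn ℂ f (ball c R)) (hC : ∀ z ∈ ball c R, ‖f z‖ ≤ C) :
    ‖fderiv ℂ f c‖ ≤ 2 * C / R := by
  refine norm_fderiv_le_div_of_mapsTo_ball hf (fun z hz ↦ ?_) hR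
  rw [mem_closedBall_iff_norm, two_mul]
  exact norm_sub_le_of_le (hC z hz) (hC c (mem_ball_self hR))

theorem uniformCauchySeqOn_fderiv {ι : Type*} {l : Filter ι} {f : ι → E → F} {c : E} {r : ℝ}
    (hr : 0 < r) (hc : UniformCauchySeqOn f l (ball c (2 * r)))
    (hf : ∀ᶠ n in l, DifferentiableOn ℂ (f n) (ball c (2 * r))) :
    UniformCauchySeqOn (fun n ↦ fderiv ℂ (f n)) l (ball c r) := by
  intro u hu
  obtain ⟨ε, hε, hεu⟩ := mem_uniformity_dist.mp hu
  filter_upwards [hc _ (dist_mem_uniformity (ε := ε * r / 4) (by positivity)),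
    hf.prod_mk hf] with n hn hfn z hz
  have hsub : ball z r ⊆ ball c (2 * r) :=
    ball_subset_ball' (by linarith [mem_ball.mp hz])
  have hat (m) (hm : DifferentiableOn ℂ (f m) (ball c (2 * r))) : DifferentiableAt ℂ (f m) z :=
    hm.differentiableAt (isOpen_ball.mem_nhds (hsub (mem_ball_self hr)))
  have hbound : ‖fderiv ℂ (f n.1 - f n.2) z‖ ≤ 2 * (ε * r / 4) / r :=
    norm_fderiv_le_of_forall_mem_ball_norm_le hr ((hfn.1.sub hfn.2).mono hsub)
      fun w hw ↦ by simpa [dist_eq_norm] using (hn w (hsub hw)).le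
  apply hεu
  calc dist (fderiv ℂ (f n.1) z) (fderiv ℂ (f n.2) z)
      = ‖fderiv ℂ (f n.1 - f n.2) z‖ := by
        rw [dist_eq_norm, fderiv_sub (hat _ hfn.1) (hat _ hfn.2)]
    _ ≤ 2 * (ε * r / 4) / r := hbound
    _ = ε / 2 := by field
    _ < ε := half_lt_self hε

theorem differentiableOn_of_tendstoUniformlyOn [CompleteSpace F] {ι : Type*} {l : Filter ι}
    [l.NeBot] {f : ι → E → F} {g : E → F} (hU : IsOpen U) (hg : TendstoUniformlyOn f g l U)
    (hf : ∀ᶠ n in l, DifferentiableOn ℂ (f n) U) : DifferentiableOn ℂ g U := by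
  intro c hcU
  obtain ⟨R, hR, hRU⟩ := Metric.isOpen_iff.mp hU c hcU
  obtain ⟨r, hr, rfl⟩ : ∃ r > 0, R = 2 * r := ⟨R / 2, by positivity, by ring⟩
  have hcauchy : UniformCauchySeqOn (fun n ↦ fderiv ℂ (f n)) l (ball c r) :=
    uniformCauchySeqOn_fderiv hr (hg.mono hRU).uniformCauchySeqOn
      (hf.mono fun n hn ↦ hn.mono hRU)
  have hlim (z) (hz : z ∈ ball c r) : ∃ g', Tendsto (fun n ↦ fderiv ℂ (f n) z) l (𝓝 g') :=
    CompleteSpace.complete (hcauchy.cauchy_map hz)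
  choose! g' hg' using hlim
  have hderiv : TendstoUniformlyOnFilter (fun n ↦ fderiv ℂ (f n)) g' l (𝓝 c) :=
    (hcauchy.tendstoUniformlyOn_of_tendsto hg').tendstoUniformlyOnFilter.mono_right
      (le_principal_iff.mpr (ball_mem_nhds c hr))
  suffices HasFDerivAt g (g' c) c from this.differentiableAt.differentiableWithinAt
  refine hasFDerivAt_of_tendstoUniformlyOnFilter (f := f) hderiv ?_ ?_
  · filter_upwards [hf.prod_mk (hU.mem_nhds hcU)] with n hn
    exact (hn.1.differentiableAt (hU.mem_nhds hn.2)).hasFDerivAt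
  · filter_upwards [hU.mem_nhds hcU] with z hz using hg.tendsto_at hz

theorem norm_sub_sub_fderiv_le_of_mapsTo_ball {c z : E} {R₁ R₂ : ℝ}
    (hf : DifferentiableOn ℂ f (ball c R₁)) (hmaps : MapsTo f (ball c R₁) (closedBall (f c) R₂))
    (hz : z ∈ ball c R₁) :
    ‖f z - f c - fderiv ℂ f c (z - c)‖ ≤ 2 * R₂ * (‖z - c‖ / R₁) ^ 2 := by
  have hR₁ : 0 < R₁ := nonempty_ball.mp ⟨z, hz⟩
  have hc : DifferentiableAt ℂ f c := hf.differentiableAt (ball_mem_nhds c hR₁)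
  let g (w : E) : F := f w - f c - fderiv ℂ f c (w - c)
  have hgc : g c = 0 := by simp [g]
  have hg_maps : MapsTo g (ball c R₁) (closedBall (g c) (2 * R₂)) := by
    intro w hw
    have hlin : ‖fderiv ℂ f c (w - c)‖ ≤ R₂ := calc
      _ ≤ R₂ / R₁ * ‖w - c‖ :=
        (fderiv ℂ f c).le_of_opNorm_le (norm_fderiv_le_div_of_mapsTo_ball hf hmaps hR₁) _
      _ ≤ R₂ / R₁ * R₁ := by
        have : 0 ≤ R₂ := nonempty_closedBall.mp ⟨_, hmaps hw⟩
        gcongr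
        exact (mem_ball_iff_norm.mp hw).le
      _ = R₂ := div_mul_cancel₀ _ hR₁.ne'
    rw [hgc, mem_closedBall_zero_iff, two_mul]
    exact norm_sub_le_of_le (mem_closedBall_iff_norm.mp (hmaps hw)) hlin
  have hg_littleO : (g · - g c) =o[𝓝 c] (fun w ↦ ‖w - c‖ ^ 1) := by
    simpa [hgc, g] using hc.hasFDerivAt.isLittleO.norm_right
  have hg_diff : DifferentiableOn ℂ g (ball c R₁) := by fun_prop
  simpa [hgc, g, dist_eq_norm_sub] using
    dist_le_mul_div_pow_of_mapsTo_ball_of_isLittleO hg_diff hg_maps hg_littleO hz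

theorem exists_ball_tendstoUniformlyOn_fderiv_apply (hU : IsOpen U)
    (hf : DifferentiableOn ℂ f U) {c : E} (hc : c ∈ U) (v : E) :
    ∃ R > 0, ball c (2 * R) ⊆ U ∧
      TendstoUniformlyOn (fun (t : ℂ) z ↦ t⁻¹ • (f (z + t • v) - f z))
        (fun z ↦ fderiv ℂ f z v) (𝓝[≠] 0) (ball c R) := by
  have hnear : ∀ᶠ z in 𝓝 c, z ∈ U ∧ f z ∈ closedBall (f c) 1 :=
    (hU.eventually_mem hc).and
      ((hf.continuousOn.continuousAt (hU.mem_nhds hc)).eventually_mem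
        (closedBall_mem_nhds _ one_pos))
  obtain ⟨ρ, hρ, hball⟩ := Metric.eventually_nhds_iff_ball.mp hnear
  obtain ⟨R, hR, rfl⟩ : ∃ R > 0, ρ = 2 * R := ⟨ρ / 2, by positivity, by ring⟩
  refine ⟨R, hR, fun z hz ↦ (hball z hz).1, Metric.tendstoUniformlyOn_iff.mpr fun ε hε ↦ ?_⟩
  have hsmall : ∀ᶠ t in 𝓝[≠] (0 : ℂ), ‖t • v‖ < R ∧ 4 * ‖t‖ * (‖v‖ / R) ^ 2 < ε := by
    refine nhdsWithin_le_nhds (Eventually.and ?_ ?_)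
    · exact ContinuousAt.eventually_lt (by fun_prop) continuousAt_const (by simpa)
    · exact ContinuousAt.eventually_lt (by fun_prop) continuousAt_const (by simpa)
  filter_upwards [hsmall, self_mem_nhdsWithin] with t ⟨htv, htε⟩ ht z hz
  have hsub : ball z R ⊆ ball c (2 * R) := ball_subset_ball' (by linarith [mem_ball.mp hz])
  have hmaps : MapsTo f (ball z R) (closedBall (f z) 2) := by
    intro w hw
    have h₁ := mem_closedBall.mp (hball w (hsub hw)).2
    have h₂ := mem_closedBall.mp (hball z (hsub (mem_ball_self hR))).2
    exact mem_closedBall.mpr ((dist_triangle_right _ _ (f c)).trans (by linarith))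
  have htaylor : ‖f (z + t • v) - f z - t • fderiv ℂ f z v‖ ≤ 2 * 2 * (‖t • v‖ / R) ^ 2 := by
    simpa using norm_sub_sub_fderiv_le_of_mapsTo_ball (z := z + t • v)
      (hf.mono fun w hw ↦ (hball w (hsub hw)).1) hmaps (by simpa using htv)
  calc dist (fderiv ℂ f z v) (t⁻¹ • (f (z + t • v) - f z))
      = ‖t‖⁻¹ * ‖f (z + t • v) - f z - t • fderiv ℂ f z v‖ := by
        rw [dist_comm, dist_eq_norm, ← norm_inv, ← norm_smul, smul_sub _ _ (t • _),
          inv_smul_smul₀ ht]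
    _ ≤ ‖t‖⁻¹ * (2 * 2 * (‖t • v‖ / R) ^ 2) := by gcongr
    _ = 4 * ‖t‖ * (‖v‖ / R) ^ 2 := by
        have : ‖t‖ ≠ 0 := norm_ne_zero_iff.mpr ht
        rw [norm_smul]
        field
    _ < ε := htε

theorem differentiableOn_fderiv_apply [CompleteSpace F] (hU : IsOpen U)
    (hf : DifferentiableOn ℂ f U) (v : E) : DifferentiableOn ℂ (fun z ↦ fderiv ℂ f z v) U := by
  intro c hc
  obtain ⟨R, hR, hRU, hlim⟩ := exists_ball_tendstoUniformlyOn_fderiv_apply hU hf hc v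
  have hsmall : ∀ᶠ t in 𝓝[≠] (0 : ℂ), ‖t • v‖ < R :=
    nhdsWithin_le_nhds (ContinuousAt.eventually_lt (by fun_prop) continuousAt_const (by simpa))
  refine ((differentiableOn_of_tendstoUniformlyOn isOpen_ball hlim ?_).differentiableAt
    (ball_mem_nhds c hR)).differentiableWithinAt
  filter_upwards [hsmall] with t ht
  have hshift : MapsTo (· + t • v) (ball c R) U := by
    refine fun z hz ↦ hRU ?_
    rw [mem_ball_iff_norm, add_sub_right_comm, two_mul]
    exact (norm_add_le _ _).trans_lt (add_lt_add (mem_ball_iff_norm.mp hz) ht)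
  have hball : ball c R ⊆ U := (ball_subset_ball (by linarith)).trans hRU
  exact ((hf.comp (by fun_prop) hshift).sub (hf.mono hball)).const_smul t⁻¹

theorem contDiffOn_of_differentiableOn_complex [FiniteDimensional ℂ E] [CompleteSpace F]
    (hU : IsOpen U) (hf : DifferentiableOn ℂ f U) : ContDiffOn ℂ ∞ f U := by
  refine contDiffOn_infty.mpr fun n ↦ ?_
  induction n generalizing f with
  | zero => exact contDiffOn_zero.mpr hf.continuousOn
  | succ n ih =>
    refine (contDiffOn_succ_iff_fderiv_of_isOpen (n := n) hU).mpr ⟨hf, by simp, ?_⟩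
    exact contDiffOn_clm_apply.mpr fun v ↦ ih (differentiableOn_fderiv_apply hU hf v)

end Holomorphic

section SecondDerivative

variable {V E F : Type*} [NormedAddCommGroup V] [NormedSpace ℝ V] [NormedAddCommGroup E]
  [NormedAddCommGroup F]

/-- The second directional derivative of `f` at `p` along `v`: the vector-valued version of `dd`
on an arbitrary real normed space. -/
def secondDirDeriv [NormedSpace ℝ F] (f : V → F) (v p : V) : F :=
  fderiv ℝ (fun q ↦ fderiv ℝ f q v) p v

variable [NormedSpace ℂ E] [NormedSpace ℂ F] {f : E → F} {p : V}

theorem fderiv_real_comp_apply {g : E → F} {L : V →L[ℝ] E} (hg : DifferentiableAt ℂ g (L p))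
    (v : V) : fderiv ℝ (g ∘ L) p v = fderiv ℂ g (L p) (L v) := by
  rw [((hg.hasFDerivAt.restrictScalars ℝ).comp p L.hasFDerivAt).fderiv]
  rfl

theorem secondDirDeriv_comp {L : V →L[ℝ] E} (hf : ContDiffAt ℂ 2 f (L p)) (v : V) :
    secondDirDeriv (f ∘ L) v p = fderiv ℂ (fderiv ℂ f) (L p) (L v) (L v) := by
  have hf' : DifferentiableAt ℂ (fderiv ℂ f) (L p) :=
    (hf.fderiv_right (m := 1) le_rfl).differentiableAt one_ne_zero
  have hnear : ∀ᶠ q in 𝓝 p, DifferentiableAt ℂ f (L q) :=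
    L.continuous.continuousAt.eventually
      ((hf.eventually (by simp)).mono fun y hy ↦ hy.differentiableAt two_ne_zero)
  have hfst : (fun q ↦ fderiv ℝ (f ∘ L) q v) =ᶠ[𝓝 p] (fderiv ℂ f · (L v)) ∘ L :=
    hnear.mono fun q hq ↦ fderiv_real_comp_apply hq v
  rw [secondDirDeriv, hfst.fderiv_eq,
    fderiv_real_comp_apply (hf'.clm_apply (differentiableAt_const _))]
  simp [fderiv_clm_apply hf' (differentiableAt_const _)]

/-- Polarised form of `x² + y² = (x - i y) (x + i y)`. -/
theorem secondDirDeriv_comp_add_secondDirDeriv_comp {L : V →L[ℝ] E}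
    (hf : ContDiffAt ℂ 2 f (L p)) (v w : V) :
    secondDirDeriv (f ∘ L) v p + secondDirDeriv (f ∘ L) w p =
      fderiv ℂ (fderiv ℂ f) (L p) (L v - I • L w) (L v + I • L w) := by
  have hsymm : IsSymmSndFDerivAt ℂ f (L p) := hf.isSymmSndFDerivAt (by simp)
  rw [secondDirDeriv_comp hf, secondDirDeriv_comp hf]
  simp only [map_add, map_sub, map_smul, sub_apply, smul_apply, smul_sub, smul_smul,
    I_mul_I, hsymm.eq (L w) (L v)]
  module

end SecondDerivative

/-- The real-linear map `(α, β) ↦ (conj α z₀ - β z₁, conj β z₀ + α z₁)` of `ℂ²`, along which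
holomorphic functions are pulled back. -/
def twist (z₀ z₁ : ℂ) : ℂ × ℂ →L[ℝ] ℂ × ℂ where
  toFun q := (conj q.1 * z₀ - q.2 * z₁, conj q.2 * z₀ + q.1 * z₁)
  map_add' a b := by ext <;> simp <;> ring
  map_smul' c a := by ext <;> simp <;> ring
  cont := by fun_prop

theorem twist_apply (z₀ z₁ : ℂ) (q : ℂ × ℂ) :
    twist z₀ z₁ q = (conj q.1 * z₀ - q.2 * z₁, conj q.2 * z₀ + q.1 * z₁) :=
  rfl

theorem holomorphic_twist_harmonic_general {F : Type*} [NormedAddCommGroup F] [NormedSpace ℂ F]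
    [CompleteSpace F] (z₀ z₁ : ℂ) {f : ℂ × ℂ → F} {U : Set (ℂ × ℂ)} (hU : IsOpen U)
    (hf : DifferentiableOn ℂ f U) {p : ℂ × ℂ} (hp : twist z₀ z₁ p ∈ U) :
    secondDirDeriv (f ∘ twist z₀ z₁) (1, 0) p + secondDirDeriv (f ∘ twist z₀ z₁) (I, 0) p +
      secondDirDeriv (f ∘ twist z₀ z₁) (0, 1) p + secondDirDeriv (f ∘ twist z₀ z₁) (0, I) p =
      0 := by
  have hf₂ : ContDiffAt ℂ 2 f (twist z₀ z₁ p) :=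
    (contDiffOn_infty.mp (contDiffOn_of_differentiableOn_complex hU hf) 2).contDiffAt
      (hU.mem_nhds hp)
  have hsymm : IsSymmSndFDerivAt ℂ f (twist z₀ z₁ p) := hf₂.isSymmSndFDerivAt (by simp)
  have hα_sub : twist z₀ z₁ (1, 0) - I • twist z₀ z₁ (I, 0) = (2 * z₁) • (0, 1) := by
    ext <;> simp [twist_apply, ← mul_assoc, two_mul]
  have hα_add : twist z₀ z₁ (1, 0) + I • twist z₀ z₁ (I, 0) = (2 * z₀) • (1, 0) := by
    ext <;> simp [twist_apply, ← mul_assoc, two_mul]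
  have hβ_sub : twist z₀ z₁ (0, 1) - I • twist z₀ z₁ (0, I) = (-2 * z₁) • (1, 0) := by
    ext <;> simp [twist_apply, ← mul_assoc]; ring
  have hβ_add : twist z₀ z₁ (0, 1) + I • twist z₀ z₁ (0, I) = (2 * z₀) • (0, 1) := by
    ext <;> simp [twist_apply, ← mul_assoc, two_mul]
  rw [secondDirDeriv_comp_add_secondDirDeriv_comp hf₂, add_assoc,
    secondDirDeriv_comp_add_secondDirDeriv_comp hf₂, hα_sub, hα_add, hβ_sub, hβ_add]
  simp only [map_smul, smul_apply, hsymm.eq (0, 1) (1, 0)]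
  module

/-- if `f : ℂ² → ℂ` is entire holomorphic, then for fixed `z₀, z₁` the function
`φ(α,β) = f (conj α • z₀ − β z₁, conj β • z₀ + α z₁)` is harmonic on `ℝ⁴ ≅ ℂ²`. -/
theorem holomorphic_twist_harmonic (z₀ z₁ : ℂ) (f : ℂ × ℂ → ℂ) (hf : Differentiable ℂ f)
    (p : ℂ × ℂ) :
    dd (fun q : ℂ × ℂ => f (conj q.1 * z₀ - q.2 * z₁, conj q.2 * z₀ + q.1 * z₁)) (1, 0) p
      + dd (fun q : ℂ × ℂ => f (conj q.1 * z₀ - q.2 * z₁, conj q.2 * z₀ + q.1 * z₁))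
          (Complex.I, 0) p
      + dd (fun q : ℂ × ℂ => f (conj q.1 * z₀ - q.2 * z₁, conj q.2 * z₀ + q.1 * z₁)) (0, 1) p
      + dd (fun q : ℂ × ℂ => f (conj q.1 * z₀ - q.2 * z₁, conj q.2 * z₀ + q.1 * z₁))
          (0, Complex.I) p
      = 0 :=
  holomorphic_twist_harmonic_general z₀ z₁ isOpen_univ hf.differentiableOn (mem_univ _)
end
end

section
/- Schur orthogonality for Wigner functions: for all ℓ, ℓ' with 2ℓ, 2ℓ' ∈ ℕ and all admissible indices m, s ∈ {−ℓ,…,ℓ}, m', s' ∈ {−ℓ',…,ℓ'}, one has ∫_{SU(2)} D^ℓ_{m,s}(g) · conj(D^{ℓ'}_{m',s'}(g)) dμ(g) = δ_{ℓ,ℓ'} δ_{m,m'} δ_{s,s'} / (2ℓ+1). -/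
open scoped ComplexConjugate Matrix
open MeasureTheory Complex

noncomputable section

/-- `SU(2)` realized as the subgroup of the `2 × 2` complex unitary group consisting of the
matrices of determinant one; its elements are exactly the matrices
`h(α,β) = !![α, -conj β; β, conj α]` with `|α|² + |β|² = 1`. -/
def SU2 : Subgroup (Matrix.unitaryGroup (Fin 2) ℂ) where
  carrier := {A | (A : Matrix (Fin 2) (Fin 2) ℂ).det = 1}
  mul_mem' := by
    intro A B hA hB
    simp only [Set.mem_setOf_eq] at *
    simp [Matrix.UnitaryGroup.mul_val, Matrix.det_mul, hA, hB]
  one_mem' := by simp [Set.mem_setOf_eq]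
  inv_mem' := by
    intro A hA
    simp only [Set.mem_setOf_eq] at *
    simp [Matrix.UnitaryGroup.inv_val, Matrix.star_eq_conjTranspose, Matrix.det_conjTranspose, hA]

instance : MeasurableSpace SU2 := borel SU2
instance : BorelSpace SU2 := ⟨rfl⟩

/-- The matrix `h(α,β)`. -/
def h (a b : ℂ) : Matrix (Fin 2) (Fin 2) ℂ := !![a, -conj b; b, conj a]

/-- The entry `α` of an element `g = h(α,β)` of `SU(2)`. -/
def ga (g : SU2) : ℂ := g.1.1 0 0

/-- The entry `β` of an element `g = h(α,β)` of `SU(2)`. -/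
def gb (g : SU2) : ℂ := g.1.1 1 0

/-- `IsWigner n D` states that `D` is the family of Wigner functions `D^ℓ_{m,s}` for `ℓ = n/2`,
where the row index `j` corresponds to `m = j - ℓ` and the column index `k` to `s = k - ℓ`:
for every `g = h(α,β) ∈ SU(2)` and all `z₀ z₁ : ℂ`,
`∑ⱼ √(binom n j) z₀^j z₁^(n-j) D j k g = √(binom n k) (conj α z₀ + conj β z₁)^k (-β z₀ + α z₁)^(n-k)`. -/
def IsWigner (n : ℕ) (D : Fin (n + 1) → Fin (n + 1) → SU2 → ℂ) : Prop :=
  ∀ (g : SU2) (k : Fin (n + 1)) (z₀ z₁ : ℂ),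
    ∑ j : Fin (n + 1),
        (Real.sqrt (n.choose (j : ℕ)) : ℂ) * z₀ ^ (j : ℕ) * z₁ ^ (n - (j : ℕ)) * D j k g
      = (Real.sqrt (n.choose (k : ℕ)) : ℂ) * (conj (ga g) * z₀ + conj (gb g) * z₁) ^ (k : ℕ)
          * (-(gb g) * z₀ + ga g * z₁) ^ (n - (k : ℕ))

/-- The action of the Wigner matrix `D^ℓ(g)` on a vector `v ∈ ℂ^{2ℓ+1}`. -/
def DVec {n : ℕ} (D : Fin (n + 1) → Fin (n + 1) → SU2 → ℂ) (g : SU2)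
    (v : Fin (n + 1) → ℂ) : Fin (n + 1) → ℂ :=
  fun j => ∑ k, D j k g * v k

/-- The Hermitian inner product `⟨v,w⟩ = ∑ₖ conj (v k) * (w k)` on `ℂ^N`. -/
def herm {N : ℕ} (v w : Fin N → ℂ) : ℂ := ∑ r, conj (v r) * w r

/-!
The binomially weighted monomials `v(z) = (√(binom n j) z₀ ^ j z₁ ^ (n - j))ⱼ` span `ℂ ^ (n + 1)`,
satisfy `v(z) ⬝ v(w) = (z ⬝ w) ^ n`, and turn the definition of the Wigner matrices `W(g)` into
`v(z) W(g) = v(g⁻¹ z)`. Hence `W` is a continuous unitary representation. By invariance of `μ`, the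
integrals `∫ W(g)ⱼₖ conj (W'(g)ⱼ'ₖ')`, as a matrix in `(j, j')`, intertwine `W` and `W'`.
Such an intertwiner `M` commutes with the diagonal torus, which acts with the weights `n - 2 j`, so
`M j j'` vanishes unless the weights agree. Comparing the top rows of `W(g) M = M W'(g)` for a `g`
whose top row has no zero entry then gives Schur's lemma: `M = 0` if `n ≠ n'`, and `M` is scalar if
`n = n'`, in which case unitarity determines its trace.
-/

section UnitaryRepresentation

variable {𝕜 G ι κ : Type*} [RCLike 𝕜] [Group G] [Fintype ι] [DecidableEq ι] [Fintype κ]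
  [DecidableEq κ] {ρ : G →* Matrix.unitaryGroup ι 𝕜} {σ : G →* Matrix.unitaryGroup κ 𝕜}

/-- `M` intertwines the unitary matrix representations `ρ` and `σ`, as the matrix of an equivariant
map from the space of `σ` to that of `ρ`. -/
def IsIntertwiner (ρ : G →* Matrix.unitaryGroup ι 𝕜) (σ : G →* Matrix.unitaryGroup κ 𝕜)
    (M : Matrix ι κ 𝕜) : Prop :=
  ∀ g, (ρ g : Matrix ι ι 𝕜) * M = M * (σ g : Matrix κ κ 𝕜)

lemma isIntertwiner_of_mul_mul_conjTranspose {M : Matrix ι κ 𝕜}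
    (hM : ∀ g, (ρ g : Matrix ι ι 𝕜) * M * (σ g : Matrix κ κ 𝕜)ᴴ = M) : IsIntertwiner ρ σ M := by
  intro g
  have unitary : (σ g : Matrix κ κ 𝕜)ᴴ * (σ g : Matrix κ κ 𝕜) = 1 :=
    Matrix.UnitaryGroup.star_mul_self (σ g)
  calc (ρ g : Matrix ι ι 𝕜) * M
      = (ρ g : Matrix ι ι 𝕜) * M * (σ g : Matrix κ κ 𝕜)ᴴ * (σ g : Matrix κ κ 𝕜) := by
        rw [Matrix.mul_assoc _ _ (σ g : Matrix κ κ 𝕜), unitary, Matrix.mul_one]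
    _ = M * (σ g : Matrix κ κ 𝕜) := by rw [hM]

lemma IsIntertwiner.conjTranspose {M : Matrix ι κ 𝕜} (hM : IsIntertwiner ρ σ M) :
    IsIntertwiner σ ρ Mᴴ := by
  intro g
  have inv_adjoint := congrArg Matrix.conjTranspose (hM g⁻¹)
  simp only [map_inv, Matrix.UnitaryGroup.inv_val, Matrix.star_eq_conjTranspose,
    Matrix.conjTranspose_mul, Matrix.conjTranspose_conjTranspose] at inv_adjoint
  exact inv_adjoint.symm

variable [MeasurableSpace G] (μ : Measure G)

/-- The inner products in `L²(μ)` of the entries in column `k` of `ρ` with those in column `l` of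
`σ`, arranged as a matrix indexed by the two rows; equivalently, the average of the matrices
`ρ g * E * (σ g)ᴴ`, where `E` is the matrix unit at `(k, l)`. -/
def coeffIntegral (ρ : G →* Matrix.unitaryGroup ι 𝕜) (σ : G →* Matrix.unitaryGroup κ 𝕜) (k : ι)
    (l : κ) : Matrix ι κ 𝕜 :=
  Matrix.of fun i j => ∫ g, (ρ g : Matrix ι ι 𝕜) i k * conj ((σ g : Matrix κ κ 𝕜) j l) ∂μ

variable {μ} [IsFiniteMeasure μ]

lemma integrable_coeff_mul_conj_coeff {i k : ι} {j l : κ}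
    (hρ : AEStronglyMeasurable (fun g => (ρ g : Matrix ι ι 𝕜) i k) μ)
    (hσ : AEStronglyMeasurable (fun g => (σ g : Matrix κ κ 𝕜) j l) μ) :
    Integrable (fun g => (ρ g : Matrix ι ι 𝕜) i k * conj ((σ g : Matrix κ κ 𝕜) j l)) μ := by
  refine .of_bound (hρ.mul (RCLike.continuous_conj.comp_aestronglyMeasurable hσ)) 1
    (.of_forall fun g => ?_)
  rw [norm_mul, RCLike.norm_conj]
  exact mul_le_one₀ (entry_norm_bound_of_unitary (ρ g).2 i k) (norm_nonneg _)
    (entry_norm_bound_of_unitary (σ g).2 j l)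

lemma isIntertwiner_coeffIntegral [MeasurableMul G] [μ.IsMulLeftInvariant]
    (hρ : ∀ i k, AEStronglyMeasurable (fun g => (ρ g : Matrix ι ι 𝕜) i k) μ)
    (hσ : ∀ j l, AEStronglyMeasurable (fun g => (σ g : Matrix κ κ 𝕜) j l) μ) (k : ι) (l : κ) :
    IsIntertwiner ρ σ (coeffIntegral μ ρ σ k l) := by
  refine isIntertwiner_of_mul_mul_conjTranspose fun a => ?_
  ext i j
  let R (g : G) : Matrix ι ι 𝕜 := ρ g
  let S (g : G) : Matrix κ κ 𝕜 := σ g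
  have expand (g : G) : R (a * g) i k * conj (S (a * g) j l)
      = ∑ j', ∑ i', R a i i' * (R g i' k * conj (S g j' l)) * conj (S a j j') := by
    simp only [R, S, map_mul, Matrix.UnitaryGroup.mul_val, Matrix.mul_apply, map_sum,
      Finset.sum_mul_sum]
    rw [Finset.sum_comm]
    exact Finset.sum_congr rfl fun _ _ => Finset.sum_congr rfl fun _ _ => by ring
  have integrable (i' : ι) (j' : κ) :
      Integrable (fun g => R a i i' * (R g i' k * conj (S g j' l)) * conj (S a j j')) μ :=
    ((integrable_coeff_mul_conj_coeff (hρ i' k) (hσ j' l)).const_mul _).mul_const _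
  symm
  calc coeffIntegral μ ρ σ k l i j
      = ∫ g, R (a * g) i k * conj (S (a * g) j l) ∂μ :=
        (integral_mul_left_eq_self (fun g => R g i k * conj (S g j l)) a).symm
    _ = ∑ j', ∑ i', R a i i' * (∫ g, R g i' k * conj (S g j' l) ∂μ) * conj (S a j j') := by
        simp only [expand]
        rw [integral_finsetSum _ fun j' _ => integrable_finsetSum _ fun i' _ => integrable i' j']
        refine Finset.sum_congr rfl fun j' _ => ?_
        rw [integral_finsetSum _ fun i' _ => integrable i' j']
        simp only [integral_mul_const, integral_const_mul]
    _ = (R a * coeffIntegral μ ρ σ k l * (S a)ᴴ) i j := by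
        simp only [Matrix.mul_apply, Finset.sum_mul, coeffIntegral, Matrix.of_apply,
          Matrix.conjTranspose_apply, R, S, RCLike.star_def]

lemma trace_coeffIntegral_self
    (hρ : ∀ i k, AEStronglyMeasurable (fun g => (ρ g : Matrix ι ι 𝕜) i k) μ) (k l : ι) :
    (coeffIntegral μ ρ ρ k l).trace = if k = l then (μ.real Set.univ : 𝕜) else 0 := by
  have columns_orthonormal (g : G) :
      ∑ i, (ρ g : Matrix ι ι 𝕜) i k * conj ((ρ g : Matrix ι ι 𝕜) i l) = if k = l then 1 else 0 := by
    have entry := congrFun₂ (Matrix.UnitaryGroup.star_mul_self (ρ g)) l k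
    simpa only [Matrix.mul_apply, Matrix.star_apply, RCLike.star_def, Matrix.one_apply, mul_comm,
      eq_comm (a := l)] using entry
  calc (coeffIntegral μ ρ ρ k l).trace
      = ∫ g, ∑ i, (ρ g : Matrix ι ι 𝕜) i k * conj ((ρ g : Matrix ι ι 𝕜) i l) ∂μ :=
        (integral_finsetSum _ fun i _ => integrable_coeff_mul_conj_coeff (hρ i k) (hρ i l)).symm
    _ = if k = l then (μ.real Set.univ : 𝕜) else 0 := by
        simp only [columns_orthonormal, integral_const]
        split_ifs <;> simp [RCLike.real_smul_eq_coe_mul]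

lemma eq_of_coeffIntegral_self_eq_smul_one
    (hρ : ∀ i k, AEStronglyMeasurable (fun g => (ρ g : Matrix ι ι 𝕜) i k) μ) {k l : ι} {c : 𝕜}
    (hc : coeffIntegral μ ρ ρ k l = c • 1) :
    c = if k = l then (μ.real Set.univ : 𝕜) / Fintype.card ι else 0 := by
  have card_ne_zero : (Fintype.card ι : 𝕜) ≠ 0 :=
    Nat.cast_ne_zero.mpr (Fintype.card_pos_iff.mpr ⟨k⟩).ne'
  have trace_eq := trace_coeffIntegral_self hρ k l
  rw [hc, Matrix.trace_smul, Matrix.trace_one, smul_eq_mul, ← eq_div_iff card_ne_zero] at trace_eq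
  rw [trace_eq, ite_div, zero_div]

end UnitaryRepresentation

section BinomialVector

/-- The vector of the monomials `z₀ ^ j * z₁ ^ (n - j)`, weighted by the square roots of the
binomial coefficients: an orthonormal basis for the invariant inner product on binary forms of
degree `n`, evaluated at `z`. -/
def binomialVec (n : ℕ) (z : Fin 2 → ℂ) : Fin (n + 1) → ℂ :=
  fun j => (Real.sqrt (n.choose j) : ℂ) * z 0 ^ (j : ℕ) * z 1 ^ (n - (j : ℕ))

lemma sqrt_choose_ne_zero {n k : ℕ} (hk : k ≤ n) : (Real.sqrt (n.choose k) : ℂ) ≠ 0 := by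
  have choose_pos : (0 : ℝ) < n.choose k := by exact_mod_cast Nat.choose_pos hk
  exact ofReal_ne_zero.mpr (Real.sqrt_pos.mpr choose_pos).ne'

lemma continuous_binomialVec (n : ℕ) : Continuous (binomialVec n) := by
  unfold binomialVec
  fun_prop

lemma star_binomialVec (n : ℕ) (z : Fin 2 → ℂ) :
    star (binomialVec n z) = binomialVec n (star z) := by
  ext j
  simp [binomialVec]

lemma binomialVec_dotProduct (n : ℕ) (z w : Fin 2 → ℂ) :
    binomialVec n z ⬝ᵥ binomialVec n w = (z ⬝ᵥ w) ^ n := by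
  rw [Matrix.vec2_dotProduct, add_pow, Finset.sum_range]
  refine Finset.sum_congr rfl fun k _ => ?_
  have sqrt_mul_sqrt : (Real.sqrt (n.choose k) : ℂ) * Real.sqrt (n.choose k) = n.choose k := by
    rw [← ofReal_mul, Real.mul_self_sqrt (Nat.cast_nonneg _), ofReal_natCast]
  rw [← sqrt_mul_sqrt, binomialVec, binomialVec]
  ring

lemma binomialVec_zero_one (n : ℕ) : binomialVec n ![0, 1] = Pi.single 0 1 := by
  ext j
  rcases eq_or_ne j 0 with rfl | hj
  · simp [binomialVec]
  · simp [binomialVec, hj, Fin.val_ne_zero_iff.mpr hj]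

/-- The matrix whose rows are the vectors `binomialVec n (i, 1)` for `i = 0, …, n`. -/
def binomialVandermonde (n : ℕ) : Matrix (Fin (n + 1)) (Fin (n + 1)) ℂ :=
  Matrix.of fun i => binomialVec n ![(i : ℂ), 1]

lemma isUnit_det_binomialVandermonde (n : ℕ) : IsUnit (binomialVandermonde n).det := by
  have factorization : binomialVandermonde n = Matrix.vandermonde (fun i : Fin (n + 1) => (i : ℂ)) *
      Matrix.diagonal fun j : Fin (n + 1) => (Real.sqrt (n.choose j) : ℂ) := by
    ext i j
    simp [binomialVandermonde, binomialVec, Matrix.vandermonde_apply, mul_comm]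
  have nodes_injective : Function.Injective fun i : Fin (n + 1) => ((i : ℕ) : ℂ) :=
    Nat.cast_injective.comp Fin.val_injective
  rw [factorization, Matrix.det_mul, Matrix.det_diagonal, isUnit_iff_ne_zero]
  exact mul_ne_zero (Matrix.det_vandermonde_ne_zero_iff.mpr nodes_injective)
    (Finset.prod_ne_zero_iff.mpr fun j _ => sqrt_choose_ne_zero j.is_le)

lemma eq_inv_binomialVandermonde_mul {n : ℕ} {κ : Type*} {A : Matrix (Fin (n + 1)) κ ℂ}
    {f : (Fin 2 → ℂ) → κ → ℂ} (hA : ∀ z, binomialVec n z ᵥ* A = f z) :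
    A = (binomialVandermonde n)⁻¹ * Matrix.of fun i : Fin (n + 1) => f ![(i : ℂ), 1] := by
  have rows : (Matrix.of fun i : Fin (n + 1) => f ![(i : ℂ), 1]) = binomialVandermonde n * A := by
    ext i j
    exact congrFun (hA ![(i : ℂ), 1]).symm j
  rw [rows, Matrix.nonsing_inv_mul_cancel_left _ _ (isUnit_det_binomialVandermonde n)]

lemma ext_binomialVec_dotProduct {n : ℕ} {a b : Fin (n + 1) → ℂ}
    (hab : ∀ z, binomialVec n z ⬝ᵥ a = binomialVec n z ⬝ᵥ b) : a = b :=
  Matrix.mulVec_injective_of_isUnit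
    ((Matrix.isUnit_iff_isUnit_det _).mpr (isUnit_det_binomialVandermonde n))
    (funext fun i => hab ![(i : ℂ), 1])

lemma ext_binomialVec_vecMul {n : ℕ} {κ : Type*} {A B : Matrix (Fin (n + 1)) κ ℂ}
    (hAB : ∀ z, binomialVec n z ᵥ* A = binomialVec n z ᵥ* B) : A = B :=
  Matrix.ext fun j k => congrFun (ext_binomialVec_dotProduct fun z => congrFun (hAB z) k) j

end BinomialVector

lemma exists_circle_zpow_ne {p q : ℤ} (hpq : p ≠ q) : ∃ u : Circle, u ^ p ≠ u ^ q := by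
  have sub_ne_zero : (p : ℝ) - q ≠ 0 := sub_ne_zero.mpr (Int.cast_injective.ne hpq)
  refine ⟨Circle.exp (Real.pi / (p - q)), fun heq => Circle.exp_pi_ne_one ?_⟩
  calc Circle.exp Real.pi = Circle.exp ((p - q : ℤ) * (Real.pi / (p - q))) := by
        rw [Int.cast_sub, mul_div_cancel₀ _ sub_ne_zero]
    _ = 1 := by rw [Circle.exp_intCast_mul, zpow_sub, heq, mul_inv_cancel]

lemma star_h (a b : ℂ) : star (h a b) = (h a b).adjugate := by
  rw [h, Matrix.adjugate_fin_two_of]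
  ext i j
  fin_cases i <;> fin_cases j <;> simp

lemma det_h (a b : ℂ) : (h a b).det = normSq a + normSq b := by
  rw [h, Matrix.det_fin_two_of, ← mul_conj, ← mul_conj]
  ring

namespace SU2

lemma coe_eq_h (g : SU2) : g.1.1 = h (ga g) (gb g) := by
  have star_eq_adjugate : star g.1.1 = g.1.1.adjugate :=
    left_inv_eq_right_inv (Matrix.UnitaryGroup.star_mul_self g.1) <| by
      rw [Matrix.mul_adjugate, show g.1.1.det = 1 from g.2, one_smul]
  have adjugate_eq_star := star_eq_adjugate.symm
  rw [Matrix.adjugate_fin_two] at adjugate_eq_star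
  have entry₁₁ : g.1.1 1 1 = conj (g.1.1 0 0) := congrFun₂ adjugate_eq_star 0 0
  have entry₀₁ : -g.1.1 0 1 = conj (g.1.1 1 0) := congrFun₂ adjugate_eq_star 0 1
  rw [Matrix.eta_fin_two g.1.1, entry₁₁, neg_eq_iff_eq_neg.mp entry₀₁]
  rfl

/-- The element `h(a, b)` of `SU(2)`. -/
def ofParams (a b : ℂ) (hab : normSq a + normSq b = 1) : SU2 :=
  have det_eq_one : (h a b).det = 1 := by rw [det_h, ← ofReal_add, hab, ofReal_one]
  ⟨⟨h a b, by
    rw [Matrix.mem_unitaryGroup_iff, star_h, Matrix.mul_adjugate, det_eq_one, one_smul]⟩,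
    det_eq_one⟩

/-- The diagonal element `h(u, 0)` of the maximal torus of `SU(2)`. -/
def torus (u : Circle) : SU2 := ofParams u 0 (by simp)

end SU2

/-- The matrix with entries `D j k g`, so that the identity defining Wigner functions becomes the
matrix identity `IsWigner.binomialVec_vecMul` and composition becomes matrix multiplication. -/
def wignerMatrix {n : ℕ} (D : Fin (n + 1) → Fin (n + 1) → SU2 → ℂ) (g : SU2) :
    Matrix (Fin (n + 1)) (Fin (n + 1)) ℂ :=
  Matrix.of fun j k => D j k g

namespace IsWigner

variable {n n' : ℕ} {D : Fin (n + 1) → Fin (n + 1) → SU2 → ℂ}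
  {D' : Fin (n' + 1) → Fin (n' + 1) → SU2 → ℂ}

lemma binomialVec_vecMul (hD : IsWigner n D) (g : SU2) (z : Fin 2 → ℂ) :
    binomialVec n z ᵥ* wignerMatrix D g = binomialVec n (star g.1.1 *ᵥ z) := by
  ext k
  rw [SU2.coe_eq_h g]
  simpa [Matrix.vecMul, dotProduct, binomialVec, wignerMatrix, h, Matrix.mulVec] using
    hD g k (z 0) (z 1)

lemma wignerMatrix_eq (hD : IsWigner n D) (g : SU2) :
    wignerMatrix D g = (binomialVandermonde n)⁻¹ *
      Matrix.of fun i : Fin (n + 1) => binomialVec n (star g.1.1 *ᵥ ![(i : ℂ), 1]) :=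
  eq_inv_binomialVandermonde_mul (hD.binomialVec_vecMul g)

lemma unique {E : Fin (n + 1) → Fin (n + 1) → SU2 → ℂ} (hD : IsWigner n D) (hE : IsWigner n E) :
    D = E := by
  ext j k g
  exact congrFun₂ ((hD.wignerMatrix_eq g).trans (hE.wignerMatrix_eq g).symm) j k

lemma continuous_wignerMatrix (hD : IsWigner n D) : Continuous (wignerMatrix D) := by
  rw [funext hD.wignerMatrix_eq]
  have continuous_coe : Continuous fun g : SU2 => g.1.1 :=
    continuous_subtype_val.comp continuous_subtype_val
  refine continuous_const.matrix_mul (continuous_pi fun i => ?_)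
  exact (continuous_binomialVec n).comp (continuous_coe.star.matrix_mulVec continuous_const)

lemma wignerMatrix_mul (hD : IsWigner n D) (g g' : SU2) :
    wignerMatrix D (g * g') = wignerMatrix D g * wignerMatrix D g' := by
  refine ext_binomialVec_vecMul fun z => ?_
  rw [← Matrix.vecMul_vecMul, hD.binomialVec_vecMul, hD.binomialVec_vecMul, hD.binomialVec_vecMul,
    Matrix.mulVec_mulVec, Subgroup.coe_mul, Matrix.UnitaryGroup.mul_val, star_mul]

lemma conjTranspose_wignerMatrix_mulVec (hD : IsWigner n D) (g : SU2) (w : Fin 2 → ℂ) :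
    (wignerMatrix D g)ᴴ *ᵥ binomialVec n w = binomialVec n (w ᵥ* g.1.1) := by
  have star_eq := congrArg star (hD.binomialVec_vecMul g (star w))
  rwa [Matrix.star_vecMul, star_binomialVec, star_binomialVec, Matrix.star_mulVec, star_star,
    Matrix.star_eq_conjTranspose, Matrix.conjTranspose_conjTranspose] at star_eq

lemma wignerMatrix_mem_unitaryGroup (hD : IsWigner n D) (g : SU2) :
    wignerMatrix D g ∈ Matrix.unitaryGroup (Fin (n + 1)) ℂ := by
  rw [Matrix.mem_unitaryGroup_iff, Matrix.star_eq_conjTranspose]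
  refine ext_binomialVec_vecMul fun z => ext_binomialVec_dotProduct fun w => ?_
  rw [dotProduct_comm, dotProduct_comm _ (binomialVec n z ᵥ* 1), Matrix.vecMul_one]
  calc binomialVec n z ᵥ* (wignerMatrix D g * (wignerMatrix D g)ᴴ) ⬝ᵥ binomialVec n w
      = binomialVec n (star g.1.1 *ᵥ z) ⬝ᵥ binomialVec n (w ᵥ* g.1.1) := by
        rw [← Matrix.vecMul_vecMul, ← Matrix.dotProduct_mulVec, hD.binomialVec_vecMul,
          hD.conjTranspose_wignerMatrix_mulVec]
    _ = ((w ᵥ* (g.1.1 * star g.1.1)) ⬝ᵥ z) ^ n := by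
        rw [binomialVec_dotProduct, dotProduct_comm, Matrix.dotProduct_mulVec,
          Matrix.vecMul_vecMul]
    _ = binomialVec n z ⬝ᵥ binomialVec n w := by
        rw [Matrix.mem_unitaryGroup_iff.mp g.1.2, Matrix.vecMul_one, binomialVec_dotProduct,
          dotProduct_comm]

/-- The Wigner functions as a unitary matrix representation of `SU(2)`. -/
def rep (hD : IsWigner n D) : SU2 →* Matrix.unitaryGroup (Fin (n + 1)) ℂ :=
  MonoidHom.mk' (fun g => ⟨wignerMatrix D g, hD.wignerMatrix_mem_unitaryGroup g⟩)
    fun g g' => Subtype.ext (hD.wignerMatrix_mul g g')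

lemma aestronglyMeasurable_rep (hD : IsWigner n D) (μ : Measure SU2) (j k : Fin (n + 1)) :
    AEStronglyMeasurable (fun g => (hD.rep g : Matrix (Fin (n + 1)) (Fin (n + 1)) ℂ) j k) μ :=
  (hD.continuous_wignerMatrix.matrix_elem j k).measurable.aestronglyMeasurable

lemma wignerMatrix_torus (hD : IsWigner n D) (u : Circle) :
    wignerMatrix D (SU2.torus u) =
      Matrix.diagonal fun j : Fin (n + 1) => ((u ^ ((n : ℤ) - 2 * j) : Circle) : ℂ) := by
  refine ext_binomialVec_vecMul fun z => ?_
  ext j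
  have weight :
      ((u ^ ((n : ℤ) - 2 * j) : Circle) : ℂ) = conj (u : ℂ) ^ (j : ℕ) * u ^ (n - j : ℕ) := by
    rw [← Circle.coe_inv_eq_conj, ← Circle.coe_pow, ← Circle.coe_pow, ← Circle.coe_mul,
      ← zpow_natCast, ← zpow_natCast, inv_zpow', ← zpow_add, Nat.cast_sub j.is_le]
    congr 2
    ring
  rw [hD.binomialVec_vecMul, Matrix.vecMul_diagonal, weight]
  simp only [binomialVec, SU2.torus, SU2.ofParams, h, Matrix.mulVec, dotProduct, Fin.sum_univ_two,
    Matrix.star_apply, Matrix.of_apply, Matrix.cons_val', Matrix.cons_val_zero, Matrix.cons_val_one,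
    Matrix.cons_val_fin_one, star_def, map_zero, neg_zero, zero_mul, add_zero, zero_add, conj_conj,
    mul_pow]
  ring

lemma exists_wignerMatrix_zero_ne_zero (hD : IsWigner n D) :
    ∃ g, ∀ k, wignerMatrix D g 0 k ≠ 0 := by
  have three_four_five : normSq (3 / 5 : ℂ) + normSq (4 / 5 : ℂ) = 1 := by norm_num
  refine ⟨SU2.ofParams (3 / 5) (4 / 5) three_four_five, fun k => ?_⟩
  have top_row := congrFun (hD.binomialVec_vecMul (SU2.ofParams _ _ three_four_five) ![0, 1]) k
  rw [binomialVec_zero_one, Matrix.single_one_vecMul, Matrix.row_apply] at top_row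
  rw [top_row]
  have sqrt_ne_zero := sqrt_choose_ne_zero k.is_le
  simp [binomialVec, SU2.ofParams, h, Matrix.mulVec, dotProduct, sqrt_ne_zero]

variable {M : Matrix (Fin (n + 1)) (Fin (n' + 1)) ℂ}

lemma intertwiner_apply_eq_zero {hD : IsWigner n D} {hD' : IsWigner n' D'}
    (hM : IsIntertwiner hD.rep hD'.rep M) {j : Fin (n + 1)} {j' : Fin (n' + 1)}
    (hjj' : (n : ℤ) - 2 * j ≠ n' - 2 * j') : M j j' = 0 := by
  obtain ⟨u, hu⟩ := exists_circle_zpow_ne hjj'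
  have torus_eq : wignerMatrix D (SU2.torus u) * M = M * wignerMatrix D' (SU2.torus u) :=
    hM (SU2.torus u)
  have entry := congrFun₂ torus_eq j j'
  rw [hD.wignerMatrix_torus, hD'.wignerMatrix_torus, Matrix.diagonal_mul, Matrix.mul_diagonal,
    mul_comm] at entry
  by_contra hM_ne
  exact hu (Circle.ext (mul_left_cancel₀ hM_ne entry))

lemma wignerMatrix_mul_intertwiner_apply {hD : IsWigner n D} {hD' : IsWigner n' D'}
    (hM : IsIntertwiner hD.rep hD'.rep M) {j : Fin (n + 1)} {j' : Fin (n' + 1)}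
    (hjj' : (n : ℤ) - 2 * j = n' - 2 * j') (g : SU2) (i : Fin (n + 1)) :
    (wignerMatrix D g * M) i j' = wignerMatrix D g i j * M j j' := by
  rw [Matrix.mul_apply]
  refine Finset.sum_eq_single_of_mem j (Finset.mem_univ j) fun k _ hkj => ?_
  have weight_ne : (n : ℤ) - 2 * k ≠ n' - 2 * j' := fun heq => hkj (Fin.ext (by lia))
  rw [intertwiner_apply_eq_zero hM weight_ne, mul_zero]

lemma intertwiner_eq_zero_of_lt {hD : IsWigner n D} {hD' : IsWigner n' D'}
    (hM : IsIntertwiner hD.rep hD'.rep M) (hn : n' < n) : M = 0 := by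
  ext j j'
  by_cases hjj' : (n : ℤ) - 2 * j = n' - 2 * j'
  · obtain ⟨g, hg⟩ := hD.exists_wignerMatrix_zero_ne_zero
    -- the highest weight `n` of `D` exceeds every weight of `D'`
    have top_row (i' : Fin (n' + 1)) : M 0 i' = 0 :=
      intertwiner_apply_eq_zero hM (by rw [Fin.val_zero]; lia)
    have product_eq_zero : wignerMatrix D g 0 j * M j j' = 0 := by
      rw [← wignerMatrix_mul_intertwiner_apply hM hjj']
      calc (wignerMatrix D g * M) 0 j' = (M * wignerMatrix D' g) 0 j' := congrFun₂ (hM g) 0 j'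
        _ = 0 := by simp only [Matrix.mul_apply, top_row, zero_mul, Finset.sum_const_zero]
    exact (mul_eq_zero.mp product_eq_zero).resolve_left (hg j)
  · exact intertwiner_apply_eq_zero hM hjj'

lemma intertwiner_eq_zero_of_ne {hD : IsWigner n D} {hD' : IsWigner n' D'}
    (hM : IsIntertwiner hD.rep hD'.rep M) (hn : n ≠ n') : M = 0 := by
  rcases hn.lt_or_gt with hlt | hgt
  · exact Matrix.conjTranspose_eq_zero.mp (intertwiner_eq_zero_of_lt hM.conjTranspose hlt)
  · exact intertwiner_eq_zero_of_lt hM hgt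

lemma intertwiner_eq_smul_one {hD : IsWigner n D} {M : Matrix (Fin (n + 1)) (Fin (n + 1)) ℂ}
    (hM : IsIntertwiner hD.rep hD.rep M) : M = M 0 0 • 1 := by
  have off_diagonal {i j : Fin (n + 1)} (hij : i ≠ j) : M i j = 0 :=
    intertwiner_apply_eq_zero hM fun heq => hij (Fin.ext (by lia))
  obtain ⟨g, hg⟩ := hD.exists_wignerMatrix_zero_ne_zero
  have diagonal (j : Fin (n + 1)) : M j j = M 0 0 := by
    refine mul_left_cancel₀ (hg j) ?_
    calc wignerMatrix D g 0 j * M j j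
        = (wignerMatrix D g * M) 0 j := (wignerMatrix_mul_intertwiner_apply hM rfl g 0).symm
      _ = (M * wignerMatrix D g) 0 j := congrFun₂ (hM g) 0 j
      _ = M 0 0 * wignerMatrix D g 0 j := by
        rw [Matrix.mul_apply]
        exact Finset.sum_eq_single_of_mem 0 (Finset.mem_univ 0) fun i _ hi => by
          rw [off_diagonal hi.symm, zero_mul]
      _ = wignerMatrix D g 0 j * M 0 0 := mul_comm _ _
  ext i j
  rcases eq_or_ne i j with rfl | hij
  · rw [diagonal, Matrix.smul_apply, Matrix.one_apply_eq, smul_eq_mul, mul_one]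
  · rw [off_diagonal hij, Matrix.smul_apply, Matrix.one_apply_ne hij, smul_zero]

end IsWigner

/-- Schur orthogonality for Wigner functions:
`∫ D^ℓ_{m,s} conj (D^{ℓ'}_{m',s'}) dμ = δ_{ℓℓ'} δ_{mm'} δ_{ss'} / (2ℓ+1)`. -/
theorem wigner_schur_orthogonality (μ : Measure SU2) [μ.IsHaarMeasure] [IsProbabilityMeasure μ]
    (n n' : ℕ) (D : Fin (n + 1) → Fin (n + 1) → SU2 → ℂ)
    (D' : Fin (n' + 1) → Fin (n' + 1) → SU2 → ℂ)
    (hD : IsWigner n D) (hD' : IsWigner n' D')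
    (j k : Fin (n + 1)) (j' k' : Fin (n' + 1)) :
    ∫ g, D j k g * conj (D' j' k' g) ∂μ
      = if n = n' ∧ (j : ℕ) = (j' : ℕ) ∧ (k : ℕ) = (k' : ℕ) then ((n : ℂ) + 1)⁻¹ else 0 := by
  have hM := isIntertwiner_coeffIntegral (hD.aestronglyMeasurable_rep μ)
    (hD'.aestronglyMeasurable_rep μ) k k'
  change coeffIntegral μ hD.rep hD'.rep k k' j j' = _
  by_cases hn : n = n'
  · subst hn
    obtain rfl := hD.unique hD'
    have scalar := IsWigner.intertwiner_eq_smul_one hM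
    rw [scalar, eq_of_coeffIntegral_self_eq_smul_one (hD.aestronglyMeasurable_rep μ) scalar]
    by_cases hj : j = j' <;> by_cases hk : k = k' <;> simp [Fin.val_inj, hj, hk]
  · rw [IsWigner.intertwiner_eq_zero_of_ne hM hn, Matrix.zero_apply, if_neg fun hall => hn hall.1]
end
end
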